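/- Let n ≥ 1, let q₁ > q₂ > 0, let u₁, u₂ > 0 and set t = 2(u₁q₁ − u₂q₂); assume t > 0. Then for every bounded Lipschitz function f : ℝ^n → ℝ and every x ∈ ℝ^n, ( P_{u₁}( e^{q₁ Q_t f} )(x) )^{1/q₁} ≤ ( P_{u₂}( e^{q₂ f} )(x) )^{1/q₂} · [ (u₁^{1/q₂}/u₂^{1/q₁}) · ( (q₁−q₂)/(u₁q₁−u₂q₂) )^{1/q₂−1/q₁} ]^{n/2} (dimensional local hypercontractivity of the Hamilton–Jacobi semigroup for the heat semigroup on ℝ^n, which satisfies CD(0,n)). -/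

import Mathlib

open MeasureTheory Real

/-- Euclidean heat semigroup, with `heat n 0 f = f`. -/
noncomputable def heat (n : ℕ) (t : ℝ) (f : EuclideanSpace ℝ (Fin n) → ℝ)
    (x : EuclideanSpace ℝ (Fin n)) : ℝ :=
  if t = 0 then f x
  else (4 * π * t) ^ (-(n : ℝ) / 2) * ∫ y, f y * Real.exp (-‖x - y‖ ^ 2 / (4 * t))

/-- Hopf-Lax (Hamilton-Jacobi) semigroup on `ℝ^n`. -/
noncomputable def hopfLax (n : ℕ) (t : ℝ) (f : EuclideanSpace ℝ (Fin n) → ℝ)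
    (x : EuclideanSpace ℝ (Fin n)) : ℝ :=
  ⨅ y : EuclideanSpace ℝ (Fin n), (f y + ‖x - y‖ ^ 2 / (2 * t))

/-!
With `r = q₂ / q₁` and `s = 1 - r`, the Prékopa–Leindler inequality is applied to
`e ^ (q₁ Q_t f)` against a rescaled heat kernel, to an auxiliary Gaussian, and to `e ^ (q₂ f)`
against the heat kernel at time `u₂`. Writing `y` for the point fed to the first function and `z`
for the interpolated one, the variance of the auxiliary Gaussian is chosen so that the three
Gaussian exponents differ by a multiple of `‖y - z‖ ^ 2` alone; for `t = 2 (u₁ q₁ - u₂ q₂)` this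
multiple is `q₂ / (2 t)`, the Hopf–Lax cost. The dimensional constant is what remains of the
normalizations of the three kernels.
-/

open Filter Module
open scoped ENNReal Pointwise Topology

section BrunnMinkowski

theorem volume_add_volume_le_of_isCompact {A B : Set ℝ} (hA : IsCompact A) (hB : IsCompact B)
    (hA' : A.Nonempty) (hB' : B.Nonempty) : volume A + volume B ≤ volume (A + B) := by
  obtain ⟨a, ha, haA⟩ := hA.exists_isGreatest hA'
  obtain ⟨b, hb, hbB⟩ := hB.exists_isLeast hB'
  have hdisj : AEDisjoint volume (b +ᵥ A) (a +ᵥ B) := by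
    refine measure_mono_null ?_ (Real.volume_singleton (a := a + b))
    rintro _ ⟨⟨x, hx, rfl⟩, y, hy, hxy⟩
    have hxa : x ≤ a := haA hx
    have hby : b ≤ y := hbB hy
    simp only [vadd_eq_add] at hxy
    simp only [vadd_eq_add, Set.mem_singleton_iff]
    linarith
  calc volume A + volume B = volume (b +ᵥ A) + volume (a +ᵥ B) := by
        rw [measure_vadd, measure_vadd]
    _ = volume ((b +ᵥ A) ∪ (a +ᵥ B)) :=
        (measure_union₀ (hB.measurableSet.const_vadd a).nullMeasurableSet hdisj).symm
    _ ≤ volume (A + B) := by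
        refine measure_mono (Set.union_subset ?_ (Set.vadd_set_subset_add ha))
        rw [add_comm A]
        exact Set.vadd_set_subset_add hb

theorem volume_add_volume_le {A B : Set ℝ} (hA : MeasurableSet A) (hB : MeasurableSet B)
    (hA' : A.Nonempty) (hB' : B.Nonempty) : volume A + volume B ≤ volume (A + B) := by
  obtain ⟨a, ha⟩ := hA'
  obtain ⟨b, hb⟩ := hB'
  simp only [hA.measure_eq_iSup_isCompact, hB.measure_eq_iSup_isCompact, iSup_and']
  refine ENNReal.biSup_add_biSup_le' ⟨∅, A.empty_subset, isCompact_empty⟩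
    ⟨∅, B.empty_subset, isCompact_empty⟩ fun K ⟨hKA, hK⟩ L ⟨hLB, hL⟩ => ?_
  calc volume K + volume L ≤ volume (insert a K) + volume (insert b L) := by
        gcongr <;> exact Set.subset_insert _ _
    _ ≤ volume (insert a K + insert b L) :=
        volume_add_volume_le_of_isCompact (hK.insert a) (hL.insert b)
          (Set.insert_nonempty a K) (Set.insert_nonempty b L)
    _ ≤ volume (A + B) := by
        gcongr
        exacts [Set.insert_subset ha hKA, Set.insert_subset hb hLB]

theorem ofReal_mul_volume_add_ofReal_mul_volume_le {r s : ℝ} (hr : 0 ≤ r) (hs : 0 ≤ s)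
    {A B : Set ℝ} (hA : MeasurableSet A) (hB : MeasurableSet B)
    (hA' : A.Nonempty) (hB' : B.Nonempty) :
    ENNReal.ofReal r * volume A + ENNReal.ofReal s * volume B ≤ volume (r • A + s • B) := by
  simpa [Measure.addHaar_smul, abs_of_nonneg hr, abs_of_nonneg hs] using
    volume_add_volume_le (hA.const_smul₀ r) (hB.const_smul₀ s)
      (hA'.smul_set (a := r)) (hB'.smul_set (a := s))

end BrunnMinkowski

/-- `μ` satisfies the Prékopa–Leindler inequality with weights `r` and `s`. The functions take
values in `ℝ≥0∞`, so that the property passes to product measures through Tonelli's theorem. -/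
def IsPrekopaLeindler {E : Type*} [AddCommGroup E] [Module ℝ E] [MeasurableSpace E]
    (r s : ℝ) (μ : Measure E) : Prop :=
  ∀ ⦃f g h : E → ℝ≥0∞⦄, Measurable f → Measurable g → Measurable h →
    (∀ x y, f x ^ r * g y ^ s ≤ h (r • x + s • y)) →
    (∫⁻ x, f x ∂μ) ^ r * (∫⁻ x, g x ∂μ) ^ s ≤ ∫⁻ x, h x ∂μ

theorem ennreal_geom_mean_le_arith_mean2_weighted {r s : ℝ} (hr : 0 < r) (hs : 0 < s)
    (hrs : r + s = 1) (a b : ℝ≥0∞) :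
    a ^ r * b ^ s ≤ ENNReal.ofReal r * a + ENNReal.ofReal s * b := by
  have hpq : (r⁻¹).HolderConjugate s⁻¹ := by
    rw [Real.holderConjugate_iff]
    exact ⟨(one_lt_inv₀ hr).2 (by linarith), by simpa using hrs⟩
  simpa [← ENNReal.rpow_mul, hr.ne', hs.ne', ENNReal.ofReal_inv_of_pos, hr, hs,
    div_eq_mul_inv, mul_comm] using ENNReal.young_inequality (a ^ r) (b ^ s) hpq

theorem lintegral_eq_lintegral_measure_ofReal_lt {α : Type*} [MeasurableSpace α] (μ : Measure α)
    {f : α → ℝ≥0∞} (hf : AEMeasurable f μ) (hf_top : ∀ x, f x ≠ ∞) :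
    ∫⁻ x, f x ∂μ = ∫⁻ t in Set.Ioi (0 : ℝ), μ {x | ENNReal.ofReal t < f x} := by
  calc ∫⁻ x, f x ∂μ = ∫⁻ x, ENNReal.ofReal (f x).toReal ∂μ := by
        simp only [ENNReal.ofReal_toReal (hf_top _)]
    _ = ∫⁻ t in Set.Ioi (0 : ℝ), μ {x | t < (f x).toReal} :=
        lintegral_eq_lintegral_meas_lt μ (.of_forall fun _ => ENNReal.toReal_nonneg)
          hf.ennreal_toReal
    _ = ∫⁻ t in Set.Ioi (0 : ℝ), μ {x | ENNReal.ofReal t < f x} :=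
        setLIntegral_congr_fun measurableSet_Ioi fun t ht => by
          simp only [ENNReal.ofReal_lt_iff_lt_toReal (Set.mem_Ioi.1 ht).le (hf_top _)]

theorem ofReal_mul_volume_superlevel_add_le {r s : ℝ} (hr : 0 < r) (hs : 0 < s)
    (hrs : r + s = 1) {f g h : ℝ → ℝ≥0∞} (hf : Measurable f) (hg : Measurable g)
    (hfgh : ∀ x y, f x ^ r * g y ^ s ≤ h (r * x + s * y)) {a : ℝ≥0∞}
    (hfa : a < ⨆ x, f x) (hga : a < ⨆ x, g x) :
    ENNReal.ofReal r * volume {x | a < f x} + ENNReal.ofReal s * volume {x | a < g x} ≤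
      volume {x | a < h x} := by
  refine (ofReal_mul_volume_add_ofReal_mul_volume_le hr.le hs.le
    (measurableSet_lt measurable_const hf) (measurableSet_lt measurable_const hg)
    (lt_iSup_iff.1 hfa) (lt_iSup_iff.1 hga)).trans (measure_mono ?_)
  rintro _ ⟨_, ⟨x, hx, rfl⟩, _, ⟨y, hy, rfl⟩, rfl⟩
  rw [Set.mem_ofPred_eq] at hx hy
  calc a = a ^ r * a ^ s := by
        rw [← ENNReal.rpow_add_of_nonneg _ _ hr.le hs.le, hrs, ENNReal.rpow_one]
    _ < f x ^ r * g y ^ s :=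
        ENNReal.mul_lt_mul (ENNReal.rpow_lt_rpow hx hr) (ENNReal.rpow_lt_rpow hy hs)
    _ ≤ h (r * x + s * y) := hfgh x y

theorem prekopaLeindler_real_of_iSup_eq_one {r s : ℝ} (hr : 0 < r) (hs : 0 < s) (hrs : r + s = 1)
    {f g h : ℝ → ℝ≥0∞} (hf : Measurable f) (hg : Measurable g) (hh : Measurable h)
    (hf1 : ⨆ x, f x = 1) (hg1 : ⨆ x, g x = 1)
    (hfgh : ∀ x y, f x ^ r * g y ^ s ≤ h (r * x + s * y)) :
    (∫⁻ x, f x) ^ r * (∫⁻ x, g x) ^ s ≤ ∫⁻ x, h x := by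
  have hf_le x : f x ≤ 1 := hf1 ▸ le_iSup f x
  have hg_le x : g x ≤ 1 := hg1 ▸ le_iSup g x
  have hlevel (t : ℝ) : ENNReal.ofReal r * volume {x | ENNReal.ofReal t < f x} +
      ENNReal.ofReal s * volume {x | ENNReal.ofReal t < g x} ≤
        volume {x | ENNReal.ofReal t < min (h x) 1} := by
    rcases lt_or_ge (ENNReal.ofReal t) 1 with ht | ht
    · refine (ofReal_mul_volume_superlevel_add_le hr hs hrs hf hg hfgh (hf1 ▸ ht)
        (hg1 ▸ ht)).trans (measure_mono fun x hx => lt_min hx ht)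
    · have hA : {x | ENNReal.ofReal t < f x} = ∅ :=
        Set.eq_empty_of_forall_notMem fun x hx => (hx.trans_le (hf_le x)).not_ge ht
      have hB : {x | ENNReal.ofReal t < g x} = ∅ :=
        Set.eq_empty_of_forall_notMem fun x hx => (hx.trans_le (hg_le x)).not_ge ht
      simp [hA, hB]
  have hmin_top x : min (h x) 1 ≠ ∞ := ne_top_of_le_ne_top ENNReal.one_ne_top (min_le_right _ _)
  have hf_top x : f x ≠ ∞ := ne_top_of_le_ne_top ENNReal.one_ne_top (hf_le x)
  have hg_top x : g x ≠ ∞ := ne_top_of_le_ne_top ENNReal.one_ne_top (hg_le x)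
  calc (∫⁻ x, f x) ^ r * (∫⁻ x, g x) ^ s
      ≤ ENNReal.ofReal r * (∫⁻ x, f x) + ENNReal.ofReal s * ∫⁻ x, g x :=
        ennreal_geom_mean_le_arith_mean2_weighted hr hs hrs _ _
    _ ≤ ∫⁻ t in Set.Ioi (0 : ℝ), (ENNReal.ofReal r * volume {x | ENNReal.ofReal t < f x} +
          ENNReal.ofReal s * volume {x | ENNReal.ofReal t < g x}) := by
        rw [lintegral_eq_lintegral_measure_ofReal_lt volume hf.aemeasurable hf_top,
          lintegral_eq_lintegral_measure_ofReal_lt volume hg.aemeasurable hg_top,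
          ← lintegral_const_mul' _ _ ENNReal.ofReal_ne_top,
          ← lintegral_const_mul' _ _ ENNReal.ofReal_ne_top]
        exact le_lintegral_add _ _
    _ ≤ ∫⁻ t in Set.Ioi (0 : ℝ), volume {x | ENNReal.ofReal t < min (h x) 1} :=
        lintegral_mono hlevel
    _ = ∫⁻ x, min (h x) 1 := (lintegral_eq_lintegral_measure_ofReal_lt volume
        (hh.min measurable_const).aemeasurable hmin_top).symm
    _ ≤ ∫⁻ x, h x := lintegral_mono fun x => min_le_left _ _

theorem rpow_lintegral_mul_rpow_lintegral_le_of_iSup_ne_top {E : Type*} [AddCommGroup E]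
    [Module ℝ E] [MeasurableSpace E] {r s : ℝ} {μ : Measure E} (hr : 0 < r) (hs : 0 < s)
    (hμ : ∀ ⦃f g h : E → ℝ≥0∞⦄, Measurable f → Measurable g → Measurable h →
      ⨆ x, f x = 1 → ⨆ x, g x = 1 → (∀ x y, f x ^ r * g y ^ s ≤ h (r • x + s • y)) →
      (∫⁻ x, f x ∂μ) ^ r * (∫⁻ x, g x ∂μ) ^ s ≤ ∫⁻ x, h x ∂μ)
    {f g h : E → ℝ≥0∞} (hf : Measurable f) (hg : Measurable g) (hh : Measurable h)
    (hf_top : ⨆ x, f x ≠ ∞) (hg_top : ⨆ x, g x ≠ ∞)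
    (hfgh : ∀ x y, f x ^ r * g y ^ s ≤ h (r • x + s • y)) :
    (∫⁻ x, f x ∂μ) ^ r * (∫⁻ x, g x ∂μ) ^ s ≤ ∫⁻ x, h x ∂μ := by
  rcases eq_or_ne (⨆ x, f x) 0 with hf0 | hf0
  · simp [ENNReal.iSup_eq_zero.1 hf0, hr]
  rcases eq_or_ne (⨆ x, g x) 0 with hg0 | hg0
  · simp [ENNReal.iSup_eq_zero.1 hg0, hs]
  set a := (⨆ x, f x)⁻¹ with ha
  set b := (⨆ x, g x)⁻¹ with hb
  have hab : a ^ r * b ^ s ≠ 0 := by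
    simp [ha, hb, ENNReal.rpow_eq_zero_iff, hr.not_gt, hs.not_gt, hf0, hg0, hf_top, hg_top]
  have hab_top : a ^ r * b ^ s ≠ ∞ :=
    ENNReal.mul_ne_top (ENNReal.rpow_ne_top_of_nonneg hr.le (ENNReal.inv_ne_top.2 hf0))
      (ENNReal.rpow_ne_top_of_nonneg hs.le (ENNReal.inv_ne_top.2 hg0))
  have hmul (c d : ℝ≥0∞) : (a * c) ^ r * (b * d) ^ s = a ^ r * b ^ s * (c ^ r * d ^ s) := by
    rw [ENNReal.mul_rpow_of_nonneg _ _ hr.le, ENNReal.mul_rpow_of_nonneg _ _ hs.le,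
      mul_mul_mul_comm]
  have hnormalized := hμ (hf.const_mul a) (hg.const_mul b) (hh.const_mul (a ^ r * b ^ s))
    (by rw [← ENNReal.mul_iSup, ENNReal.inv_mul_cancel hf0 hf_top])
    (by rw [← ENNReal.mul_iSup, ENNReal.inv_mul_cancel hg0 hg_top])
    (fun x y => by rw [hmul]; gcongr; exact hfgh x y)
  rw [lintegral_const_mul _ hf, lintegral_const_mul _ hg, lintegral_const_mul _ hh, hmul]
    at hnormalized
  exact (ENNReal.mul_le_mul_iff_right hab hab_top).1 hnormalized

theorem tendsto_lintegral_min_natCast {α : Type*} [MeasurableSpace α] (μ : Measure α)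
    {f : α → ℝ≥0∞} (hf : AEMeasurable f μ) :
    Tendsto (fun N : ℕ => ∫⁻ x, min (f x) N ∂μ) atTop (𝓝 (∫⁻ x, f x ∂μ)) := by
  refine lintegral_tendsto_of_tendsto_of_monotone (fun N => hf.min aemeasurable_const)
    (.of_forall fun x m n hmn => ?_) (.of_forall fun x => ?_)
  · exact min_le_min_left _ (Nat.cast_le.2 hmn)
  · simpa using (tendsto_const_nhds (x := f x)).min ENNReal.tendsto_nat_nhds_top

namespace IsPrekopaLeindler

variable {E F : Type*} [AddCommGroup E] [Module ℝ E] [MeasurableSpace E]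
  [AddCommGroup F] [Module ℝ F] [MeasurableSpace F] {r s : ℝ} {μ : Measure E} {ν : Measure F}

theorem of_iSup_eq_one (hr : 0 < r) (hs : 0 < s)
    (hμ : ∀ ⦃f g h : E → ℝ≥0∞⦄, Measurable f → Measurable g → Measurable h →
      ⨆ x, f x = 1 → ⨆ x, g x = 1 → (∀ x y, f x ^ r * g y ^ s ≤ h (r • x + s • y)) →
      (∫⁻ x, f x ∂μ) ^ r * (∫⁻ x, g x ∂μ) ^ s ≤ ∫⁻ x, h x ∂μ) :
    IsPrekopaLeindler r s μ := by
  intro f g h hf hg hh hfgh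
  rcases eq_or_ne (∫⁻ x, f x ∂μ) 0 with hf0 | hf0
  · simp [hf0, hr]
  rcases eq_or_ne (∫⁻ x, g x ∂μ) 0 with hg0 | hg0
  · simp [hg0, hs]
  have hlim_f := (tendsto_lintegral_min_natCast μ hf.aemeasurable).ennrpow_const r
  have hlim_g := (tendsto_lintegral_min_natCast μ hg.aemeasurable).ennrpow_const s
  have htrunc_top (k : E → ℝ≥0∞) (N : ℕ) : ⨆ x, min (k x) N ≠ ∞ :=
    ne_top_of_le_ne_top (ENNReal.natCast_ne_top N) (iSup_le fun x => min_le_right _ _)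
  refine le_of_tendsto' (ENNReal.Tendsto.mul hlim_f (.inl ?_) hlim_g (.inl ?_)) fun N => ?_
  · simp [ENNReal.rpow_eq_zero_iff, hf0, hr.not_gt]
  · simp [ENNReal.rpow_eq_zero_iff, hg0, hs.not_gt]
  · refine rpow_lintegral_mul_rpow_lintegral_le_of_iSup_ne_top hr hs hμ
      (hf.min measurable_const) (hg.min measurable_const) hh (htrunc_top f N) (htrunc_top g N)
      fun x y => le_trans ?_ (hfgh x y)
    gcongr <;> exact min_le_left _ _

theorem volume_real (hr : 0 < r) (hs : 0 < s) (hrs : r + s = 1) :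
    IsPrekopaLeindler r s (volume : Measure ℝ) :=
  of_iSup_eq_one hr hs fun _ _ _ => prekopaLeindler_real_of_iSup_eq_one hr hs hrs

theorem prod [SFinite ν] (hμ : IsPrekopaLeindler r s μ)
    (hν : IsPrekopaLeindler r s ν) : IsPrekopaLeindler r s (μ.prod ν) := by
  intro f g h hf hg hh hfgh
  rw [lintegral_prod _ hf.aemeasurable, lintegral_prod _ hg.aemeasurable,
    lintegral_prod _ hh.aemeasurable]
  exact hμ hf.lintegral_prod_right' hg.lintegral_prod_right' hh.lintegral_prod_right' fun a b =>
    hν (hf.comp measurable_prodMk_left) (hg.comp measurable_prodMk_left)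
      (hh.comp measurable_prodMk_left) fun v w => hfgh (a, v) (b, w)

theorem map (hμ : IsPrekopaLeindler r s μ) (φ : E →ₗ[ℝ] F) (hφ : Measurable φ) :
    IsPrekopaLeindler r s (μ.map φ) := by
  intro f g h hf hg hh hfgh
  rw [lintegral_map hf hφ, lintegral_map hg hφ, lintegral_map hh hφ]
  exact hμ (hf.comp hφ) (hg.comp hφ) (hh.comp hφ) fun x y => by
    simpa using hfgh (φ x) (φ y)

theorem dirac_zero : IsPrekopaLeindler r s (Measure.dirac (0 : E)) := by
  intro f g h hf hg hh hfgh
  simpa [lintegral_dirac' _ hf, lintegral_dirac' _ hg, lintegral_dirac' _ hh] using hfgh 0 0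

theorem volume_pi_fin (hr : 0 < r) (hs : 0 < s) (hrs : r + s = 1) (n : ℕ) :
    IsPrekopaLeindler r s (volume : Measure (Fin n → ℝ)) := by
  induction n with
  | zero =>
    rw [Measure.volume_pi_eq_dirac (0 : Fin 0 → ℝ)]
    exact dirac_zero (E := Fin 0 → ℝ)
  | succ n ih =>
    let cons := Fin.consLinearEquiv ℝ fun _ : Fin (n + 1) => ℝ
    have hcons : MeasurePreserving cons := by
      convert (volume_preserving_piFinSuccAbove (fun _ : Fin (n + 1) => ℝ) 0).symm using 1
      exact funext fun p => (Fin.insertNth_zero' p.1 p.2).symm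
    rw [← hcons.map_eq]
    exact ((volume_real hr hs hrs).prod ih).map cons.toLinearMap hcons.measurable

theorem volume_innerProductSpace {E : Type*} [NormedAddCommGroup E]
    [InnerProductSpace ℝ E] [FiniteDimensional ℝ E] [MeasurableSpace E] [BorelSpace E]
    (hr : 0 < r) (hs : 0 < s) (hrs : r + s = 1) :
    IsPrekopaLeindler r s (volume : Measure E) := by
  let b := stdOrthonormalBasis ℝ E
  let toE := b.repr.symm.toLinearMap ∘ₗ
    (WithLp.linearEquiv 2 ℝ (Fin (finrank ℝ E) → ℝ)).symm.toLinearMap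
  have htoE : MeasurePreserving toE :=
    b.measurePreserving_repr_symm.comp (PiLp.volume_preserving_toLp _)
  rw [← htoE.map_eq]
  exact (volume_pi_fin hr hs hrs _).map toE htoE.measurable

theorem rpow_integral_mul_rpow_integral_le [TopologicalSpace E] [ContinuousConstSMul ℝ E]
    [ContinuousSub E] [OpensMeasurableSpace E] (hμ : IsPrekopaLeindler r s μ)
    (hr : 0 < r) (hs : 0 < s) (hrs : r + s = 1)
    {f g h : E → ℝ} (hf : Measurable f) (hg : Continuous g) (hf0 : ∀ x, 0 ≤ f x)
    (hg0 : ∀ x, 0 ≤ g x) (hh : Integrable h μ)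
    (hfgh : ∀ x y, f x ^ r * g y ^ s ≤ h (r • x + s • y)) :
    (∫ x, f x ∂μ) ^ r * (∫ x, g x ∂μ) ^ s ≤ ∫ x, h x ∂μ := by
  -- `h` is only almost everywhere measurable while its lower bound holds pointwise; the
  -- sup-convolution `k ≤ h` is Borel because continuity of `g` makes it lower semicontinuous.
  let k z := ⨆ x, ENNReal.ofReal (f x ^ r * g (s⁻¹ • (z - r • x)) ^ s)
  have hk : Measurable k := by
    refine (lowerSemicontinuous_iSup fun x => Continuous.lowerSemicontinuous ?_).measurable
    refine ENNReal.continuous_ofReal.comp ?_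
    exact ((hg.comp (by fun_prop)).rpow_const fun _ => .inr hs.le).const_mul _
  have hfgk x y : ENNReal.ofReal (f x) ^ r * ENNReal.ofReal (g y) ^ s ≤ k (r • x + s • y) := by
    refine le_iSup_of_le x (le_of_eq ?_)
    rw [add_sub_cancel_left, inv_smul_smul₀ hs.ne', ENNReal.ofReal_mul (rpow_nonneg (hf0 x) r),
      ENNReal.ofReal_rpow_of_nonneg (hf0 x) hr.le, ENNReal.ofReal_rpow_of_nonneg (hg0 y) hs.le]
  have hkh z : k z ≤ ENNReal.ofReal (h z) := iSup_le fun x => by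
    simpa [smul_inv_smul₀ hs.ne'] using
      ENNReal.ofReal_le_ofReal (hfgh x (s⁻¹ • (z - r • x)))
  have hh0 z : 0 ≤ h z := by
    refine (mul_nonneg (rpow_nonneg (hf0 z) r) (rpow_nonneg (hg0 z) s)).trans ?_
    simpa [← add_smul, hrs] using hfgh z z
  have hh_top : ∫⁻ x, ENNReal.ofReal (h x) ∂μ ≠ ∞ := hh.lintegral_lt_top.ne
  rw [integral_eq_lintegral_of_nonneg_ae (.of_forall hf0) hf.aestronglyMeasurable,
    integral_eq_lintegral_of_nonneg_ae (.of_forall hg0) hg.measurable.aestronglyMeasurable,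
    integral_eq_lintegral_of_nonneg_ae (.of_forall hh0) hh.aestronglyMeasurable,
    ENNReal.toReal_rpow, ENNReal.toReal_rpow, ← ENNReal.toReal_mul]
  exact ENNReal.toReal_mono hh_top ((hμ hf.ennreal_ofReal hg.measurable.ennreal_ofReal hk
    hfgk).trans (lintegral_mono hkh))

end IsPrekopaLeindler

/-- The Gauss–Weierstrass kernel on a Euclidean space, normalized as the fundamental solution of
`∂ₜ = Δ` (rather than `∂ₜ = Δ / 2`), so that it is the kernel of `heat`. -/
noncomputable def heatKernel {E : Type*} [NormedAddCommGroup E] [InnerProductSpace ℝ E]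
    (u : ℝ) (z : E) : ℝ :=
  (4 * π * u) ^ (-(finrank ℝ E : ℝ) / 2) * exp (-‖z‖ ^ 2 / (4 * u))

section HeatKernel

variable {E : Type*} [NormedAddCommGroup E] [InnerProductSpace ℝ E]

theorem heatKernel_nonneg {u : ℝ} (hu : 0 ≤ u) (z : E) : 0 ≤ heatKernel u z := by
  unfold heatKernel
  positivity

@[fun_prop]
theorem continuous_heatKernel (u : ℝ) : Continuous (heatKernel u : E → ℝ) := by
  unfold heatKernel
  fun_prop

theorem heatKernel_smul {a u : ℝ} (ha : 0 < a) (hu : 0 ≤ u) (z : E) :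
    heatKernel (a ^ 2 * u) (a • z) = (a ^ finrank ℝ E)⁻¹ * heatKernel u z := by
  have hpow : (a ^ 2) ^ (-(finrank ℝ E : ℝ) / 2) = (a ^ finrank ℝ E)⁻¹ := by
    rw [← rpow_natCast a 2, ← rpow_mul ha.le, ← rpow_natCast, ← rpow_neg ha.le]
    congr 1
    push_cast
    ring
  have hexp : -‖a • z‖ ^ 2 / (4 * (a ^ 2 * u)) = -‖z‖ ^ 2 / (4 * u) := by
    rw [norm_smul, mul_pow, norm_eq_abs, sq_abs]
    field_simp
  rw [heatKernel, heatKernel, hexp, mul_left_comm, mul_rpow (by positivity) (by positivity), hpow,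
    mul_assoc]

theorem norm_smul_add_smul_sq_add_mul_norm_smul_sub_smul_sq (r s : ℝ) {c : ℝ} (hc : c ≠ 0)
    (v w : E) :
    ‖r • v + s • w‖ ^ 2 + r / c * ‖c • v - s • w‖ ^ 2 =
      (r + c) * (r * ‖v‖ ^ 2 + s ^ 2 / c * ‖w‖ ^ 2) := by
  rw [norm_add_sq_real, norm_sub_sq_real]
  simp only [norm_smul, real_inner_smul_left, real_inner_smul_right, mul_pow, norm_eq_abs, sq_abs]
  field_simp
  ring

theorem div_rpow_mul_div_mul_rpow {r s a b A : ℝ} (hrs : r + s = 1) (ha : 0 < a) (hb : 0 ≤ b)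
    (hA : 0 < A) : (A / a) ^ r * (A / (a * b)) ^ s = A / (a * b ^ s) := by
  rw [← div_div, div_rpow (div_pos hA ha).le hb, ← mul_div_assoc,
    ← rpow_add (div_pos hA ha), hrs, rpow_one, div_div]

theorem heatKernel_rpow_mul_heatKernel_rpow {r s c u : ℝ} (hr : 0 < r) (hs : 0 < s)
    (hrs : r + s = 1) (hc : 0 < c) (hu : 0 < u) (v w : E) :
    heatKernel (u / (r + c)) v ^ r * heatKernel (u * c / (s * (r + c))) w ^ s =
      ((r + c) * (s / c) ^ s) ^ ((finrank ℝ E : ℝ) / 2) *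
        (exp (-(r / (4 * u * c) * ‖c • v - s • w‖ ^ 2)) * heatKernel u (r • v + s • w)) := by
  have hexp : exp (-‖v‖ ^ 2 / (4 * (u / (r + c)))) ^ r *
      exp (-‖w‖ ^ 2 / (4 * (u * c / (s * (r + c))))) ^ s =
        exp (-(r / (4 * u * c) * ‖c • v - s • w‖ ^ 2)) *
          exp (-‖r • v + s • w‖ ^ 2 / (4 * u)) := by
    rw [← exp_mul, ← exp_mul, ← exp_add, ← exp_add]
    congr 1
    have hid := norm_smul_add_smul_sq_add_mul_norm_smul_sub_smul_sq r s hc.ne' v w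
    field_simp at hid ⊢
    linear_combination hid
  have hbase : (4 * π * (u / (r + c))) ^ r * (4 * π * (u * c / (s * (r + c)))) ^ s =
      4 * π * u / ((r + c) * (s / c) ^ s) := by
    rw [← div_rpow_mul_div_mul_rpow hrs (by positivity) (by positivity) (by positivity),
      mul_div_assoc (4 * π) u]
    congr 2
    field_simp
  have hnormalization (d : ℝ) :
      ((4 * π * (u / (r + c))) ^ (-d / 2)) ^ r *
          ((4 * π * (u * c / (s * (r + c)))) ^ (-d / 2)) ^ s =
        ((r + c) * (s / c) ^ s) ^ (d / 2) * (4 * π * u) ^ (-d / 2) := by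
    rw [← rpow_mul (by positivity), mul_comm _ r, rpow_mul (by positivity),
      ← rpow_mul (by positivity) _ s, mul_comm _ s, rpow_mul (by positivity),
      ← mul_rpow (by positivity) (by positivity), hbase, div_rpow (by positivity) (by positivity),
      neg_div, rpow_neg (by positivity : 0 ≤ (r + c) * (s / c) ^ s), div_inv_eq_mul, mul_comm]
  simp only [heatKernel]
  rw [mul_rpow (by positivity) (exp_nonneg _), mul_rpow (by positivity) (exp_nonneg _),
    mul_mul_mul_comm, hnormalization, hexp]
  ring

variable [FiniteDimensional ℝ E] [MeasurableSpace E] [BorelSpace E]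

theorem integral_heatKernel {u : ℝ} (hu : 0 < u) : ∫ z : E, heatKernel u z = 1 := by
  have hexp (z : E) : exp (-‖z‖ ^ 2 / (4 * u)) = exp (-(1 / (4 * u)) * ‖z‖ ^ 2) := by
    congr 1
    ring
  simp only [heatKernel, hexp]
  rw [integral_const_mul, GaussianFourier.integral_rexp_neg_mul_sq_norm (by positivity),
    div_div_eq_mul_div, div_one, neg_div, mul_left_comm π, ← mul_assoc, ← rpow_add (by positivity),
    neg_add_cancel, rpow_zero]

theorem integrable_heatKernel {u : ℝ} (hu : 0 < u) : Integrable (heatKernel u : E → ℝ) :=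
  .of_integral_ne_zero (by rw [integral_heatKernel hu]; exact one_ne_zero)

theorem integral_comp_sub_smul_mul_heatKernel {a u : ℝ} (ha : 0 < a) (hu : 0 ≤ u) (Φ : E → ℝ)
    (x : E) :
    ∫ z, Φ (x - a • z) * heatKernel u z = ∫ y, Φ y * heatKernel (a ^ 2 * u) (x - y) := by
  have hker (z : E) : heatKernel u z = a ^ finrank ℝ E * heatKernel (a ^ 2 * u) (a • z) := by
    rw [heatKernel_smul ha hu, mul_inv_cancel_left₀ (by positivity)]
  calc ∫ z, Φ (x - a • z) * heatKernel u z
      = a ^ finrank ℝ E * ∫ z, Φ (x - a • z) * heatKernel (a ^ 2 * u) (a • z) := by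
        simp only [hker, mul_left_comm (Φ _), integral_const_mul]
    _ = ∫ z, Φ (x - z) * heatKernel (a ^ 2 * u) z := by
        rw [Measure.integral_comp_smul_of_nonneg volume
          (fun z => Φ (x - z) * heatKernel (a ^ 2 * u) z) a (hR := ha.le), smul_eq_mul,
          mul_inv_cancel_left₀ (by positivity)]
    _ = ∫ y, Φ y * heatKernel (a ^ 2 * u) (x - y) := by
        rw [← integral_sub_left_eq_self _ volume x]
        simp only [sub_sub_cancel]

theorem rpow_integral_mul_heatKernel_le {r s c u : ℝ} (hr : 0 < r) (hs : 0 < s)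
    (hrs : r + s = 1) (hc : 0 < c) (hu : 0 < u) {Φ Ψ : E → ℝ} (hΦ : Measurable Φ)
    (hΦ0 : ∀ y, 0 ≤ Φ y) (x : E) (hΨ : Integrable fun y => Ψ y * heatKernel u (x - y))
    (hΦΨ : ∀ y z, Φ y ^ r * exp (-(r / (4 * u * c) * ‖y - z‖ ^ 2)) ≤ Ψ z) :
    (∫ y, Φ y * heatKernel ((r + c) * u) (x - y)) ^ r ≤
      ((r + c) * (s / c) ^ s) ^ ((finrank ℝ E : ℝ) / 2) * ∫ y, Ψ y * heatKernel u (x - y) := by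
  set K := ((r + c) * (s / c) ^ s) ^ ((finrank ℝ E : ℝ) / 2)
  have hΨ_int : ∫ z, Ψ (x - z) * heatKernel u z = ∫ y, Ψ y * heatKernel u (x - y) := by
    simpa only [sub_sub_cancel] using
      integral_sub_left_eq_self (fun y => Ψ y * heatKernel u (x - y)) volume x
  have hΨ' : Integrable fun z => K * (Ψ (x - z) * heatKernel u z) := by
    simpa only [sub_sub_cancel] using (hΨ.comp_sub_left x).const_mul K
  have hpointwise (v w : E) :
      (Φ (x - (r + c) • v) * heatKernel (u / (r + c)) v) ^ r *
          heatKernel (u * c / (s * (r + c))) w ^ s ≤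
        K * (Ψ (x - (r • v + s • w)) * heatKernel u (r • v + s • w)) := by
    have hdist : ‖x - (r + c) • v - (x - (r • v + s • w))‖ = ‖c • v - s • w‖ := by
      rw [← norm_neg]
      congr 1
      module
    have hdom := hΦΨ (x - (r + c) • v) (x - (r • v + s • w))
    rw [hdist] at hdom
    rw [mul_rpow (hΦ0 _) (heatKernel_nonneg (by positivity) _), mul_assoc,
      heatKernel_rpow_mul_heatKernel_rpow hr hs hrs hc hu, mul_left_comm, ← mul_assoc (_ ^ r)]
    gcongr
    exact heatKernel_nonneg hu.le _
  have hvar : (r + c) ^ 2 * (u / (r + c)) = (r + c) * u := by field_simp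
  have hPL := (IsPrekopaLeindler.volume_innerProductSpace hr hs hrs
    ).rpow_integral_mul_rpow_integral_le hr hs hrs (by fun_prop) (by fun_prop)
      (fun v => mul_nonneg (hΦ0 _) (heatKernel_nonneg (by positivity) v))
      (heatKernel_nonneg (by positivity)) hΨ' hpointwise
  rw [integral_heatKernel (by positivity), one_rpow, mul_one, integral_const_mul,
    hΨ_int, integral_comp_sub_smul_mul_heatKernel (by positivity) (by positivity), hvar] at hPL
  exact hPL

end HeatKernel

section HopfLax

variable {n : ℕ} {t : ℝ} {f : EuclideanSpace ℝ (Fin n) → ℝ}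

theorem bddBelow_range_add_norm_sub_sq_div (ht : 0 ≤ t) (hf : BddBelow (Set.range f))
    (x : EuclideanSpace ℝ (Fin n)) :
    BddBelow (Set.range fun y => f y + ‖x - y‖ ^ 2 / (2 * t)) :=
  hf.range_mono _ fun y => le_add_of_nonneg_right (by positivity)

theorem hopfLax_le {x : EuclideanSpace ℝ (Fin n)}
    (hf : BddBelow (Set.range fun y => f y + ‖x - y‖ ^ 2 / (2 * t)))
    (y : EuclideanSpace ℝ (Fin n)) : hopfLax n t f x ≤ f y + ‖x - y‖ ^ 2 / (2 * t) :=
  ciInf_le hf y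

theorem measurable_hopfLax
    (hf : ∀ x, BddBelow (Set.range fun y => f y + ‖x - y‖ ^ 2 / (2 * t))) :
    Measurable (hopfLax n t f) :=
  (upperSemicontinuous_ciInf hf fun _ =>
    Continuous.upperSemicontinuous (by fun_prop)).measurable

end HopfLax

section Heat

variable {n : ℕ} {u : ℝ} {f : EuclideanSpace ℝ (Fin n) → ℝ}

theorem heat_eq_integral_heatKernel (hu : u ≠ 0) (f : EuclideanSpace ℝ (Fin n) → ℝ)
    (x : EuclideanSpace ℝ (Fin n)) :
    heat n u f x = ∫ y, f y * heatKernel u (x - y) := by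
  simp only [heat, if_neg hu, heatKernel, finrank_euclideanSpace_fin, mul_left_comm (f _),
    integral_const_mul]

theorem heat_nonneg (hu : 0 ≤ u) (hf : ∀ y, 0 ≤ f y) (x : EuclideanSpace ℝ (Fin n)) :
    0 ≤ heat n u f x := by
  rcases hu.eq_or_lt with rfl | hu
  · simpa only [heat, if_true] using hf x
  · rw [heat_eq_integral_heatKernel hu.ne']
    exact integral_nonneg fun y => mul_nonneg (hf y) (heatKernel_nonneg hu.le _)

theorem integrable_exp_mul_heatKernel (hu : 0 < u) (hf : Measurable f)
    (hf_bdd : BddAbove (Set.range f)) (x : EuclideanSpace ℝ (Fin n)) :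
    Integrable fun y => exp (f y) * heatKernel u (x - y) := by
  obtain ⟨C, hC⟩ := hf_bdd
  refine ((integrable_heatKernel hu).comp_sub_left x).bdd_mul (c := exp C)
    hf.exp.aestronglyMeasurable (.of_forall fun y => ?_)
  rw [norm_of_nonneg (exp_nonneg _), exp_le_exp]
  exact hC ⟨y, rfl⟩

end Heat

section Hypercontractivity

variable {n : ℕ} {q₁ q₂ u₁ u₂ : ℝ} {f : EuclideanSpace ℝ (Fin n) → ℝ}

theorem heat_exp_mul_hopfLax_rpow_le (hq₂ : 0 < q₂) (hq : q₂ < q₁) (hu₂ : 0 < u₂)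
    (ht : 0 < 2 * (u₁ * q₁ - u₂ * q₂))
    (hf : ∀ x, BddBelow
      (Set.range fun y => f y + ‖x - y‖ ^ 2 / (2 * (2 * (u₁ * q₁ - u₂ * q₂)))))
    (x : EuclideanSpace ℝ (Fin n))
    (hint : Integrable fun y => exp (q₂ * f y) * heatKernel u₂ (x - y)) :
    heat n u₁ (fun y => exp (q₁ * hopfLax n (2 * (u₁ * q₁ - u₂ * q₂)) f y)) x ^ (q₂ / q₁) ≤
      (u₁ / u₂ * (u₂ * ((q₁ - q₂) / (u₁ * q₁ - u₂ * q₂))) ^ (1 - q₂ / q₁)) ^ ((n : ℝ) / 2) *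
        heat n u₂ (fun y => exp (q₂ * f y)) x := by
  have hq₁ : 0 < q₁ := hq₂.trans hq
  have hδ : 0 < u₁ * q₁ - u₂ * q₂ := pos_of_mul_pos_right ht zero_le_two
  have hu₁ : 0 < u₁ := pos_of_mul_pos_left (by nlinarith [mul_pos hu₂ hq₂]) hq₁.le
  set H := hopfLax n (2 * (u₁ * q₁ - u₂ * q₂)) f
  set c := (u₁ * q₁ - u₂ * q₂) / (u₂ * q₁) with hc
  have hdil : q₂ / q₁ + c = u₁ / u₂ := by
    rw [hc]
    field_simp
    ring
  have hscale : (1 - q₂ / q₁) / c = u₂ * ((q₁ - q₂) / (u₁ * q₁ - u₂ * q₂)) := by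
    rw [hc]
    field_simp
  have hcost : q₂ / q₁ / (4 * u₂ * c) = q₂ / (2 * (2 * (u₁ * q₁ - u₂ * q₂))) := by
    rw [hc]
    field_simp
    norm_num
  have hdom (y z : EuclideanSpace ℝ (Fin n)) :
      exp (q₁ * H y) ^ (q₂ / q₁) * exp (-(q₂ / q₁ / (4 * u₂ * c) * ‖y - z‖ ^ 2)) ≤
        exp (q₂ * f z) := by
    rw [← exp_mul, ← exp_add, exp_le_exp, mul_right_comm, mul_div_cancel₀ _ hq₁.ne', hcost]
    linear_combination q₂ * hopfLax_le (hf y) z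
  have hmeas : Measurable fun y => exp (q₁ * H y) :=
    ((measurable_hopfLax hf).const_mul q₁).exp
  have hkey := rpow_integral_mul_heatKernel_le (s := 1 - q₂ / q₁) (by positivity)
    (sub_pos.2 ((div_lt_one hq₁).2 hq)) (by ring) (by positivity) hu₂ hmeas
    (fun _ => exp_nonneg _) x hint hdom
  rwa [hdil, hscale, div_mul_cancel₀ _ hu₂.ne', finrank_euclideanSpace_fin,
    ← heat_eq_integral_heatKernel hu₁.ne', ← heat_eq_integral_heatKernel hu₂.ne'] at hkey

theorem hypercontractivity_constant_rpow {D : ℝ} (hq₁ : q₁ ≠ 0) (hq₂ : q₂ ≠ 0) (hu₁ : 0 ≤ u₁)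
    (hu₂ : 0 < u₂) (hD : 0 ≤ D) :
    (u₁ / u₂ * (u₂ * D) ^ (1 - q₂ / q₁)) ^ (1 / q₂) =
      u₁ ^ (1 / q₂) / u₂ ^ (1 / q₁) * D ^ (1 / q₂ - 1 / q₁) := by
  have hexponent : (1 - q₂ / q₁) * (1 / q₂) = 1 / q₂ - 1 / q₁ := by field_simp
  rw [mul_rpow (by positivity) (by positivity), ← rpow_mul (by positivity), hexponent,
    div_rpow hu₁ hu₂.le, mul_rpow hu₂.le hD, rpow_sub hu₂]
  field_simp

theorem dimensional_local_hypercontractivity_hamilton_jacobi_general (hq₂ : 0 < q₂)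
    (hq : q₂ < q₁) (hu₂ : 0 < u₂) (ht : 0 < 2 * (u₁ * q₁ - u₂ * q₂))
    (hf : ∀ x, BddBelow
      (Set.range fun y => f y + ‖x - y‖ ^ 2 / (2 * (2 * (u₁ * q₁ - u₂ * q₂)))))
    (x : EuclideanSpace ℝ (Fin n))
    (hint : Integrable fun y => exp (q₂ * f y) * heatKernel u₂ (x - y)) :
    heat n u₁ (fun y => exp (q₁ * hopfLax n (2 * (u₁ * q₁ - u₂ * q₂)) f y)) x ^ (1 / q₁) ≤
      heat n u₂ (fun y => exp (q₂ * f y)) x ^ (1 / q₂) *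
        ((u₁ ^ (1 / q₂) / u₂ ^ (1 / q₁)) *
          ((q₁ - q₂) / (u₁ * q₁ - u₂ * q₂)) ^ (1 / q₂ - 1 / q₁)) ^ ((n : ℝ) / 2) := by
  have hq₁ : 0 < q₁ := hq₂.trans hq
  have hδ : 0 < u₁ * q₁ - u₂ * q₂ := pos_of_mul_pos_right ht zero_le_two
  have hu₁ : 0 < u₁ := pos_of_mul_pos_left (by nlinarith [mul_pos hu₂ hq₂]) hq₁.le
  have hD : 0 ≤ (q₁ - q₂) / (u₁ * q₁ - u₂ * q₂) := div_nonneg (sub_nonneg.2 hq.le) hδ.le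
  have hP₁ : 0 ≤ heat n u₁ (fun y => exp (q₁ * hopfLax n (2 * (u₁ * q₁ - u₂ * q₂)) f y)) x :=
    heat_nonneg hu₁.le (fun _ => exp_nonneg _) x
  have hP₂ : 0 ≤ heat n u₂ (fun y => exp (q₂ * f y)) x :=
    heat_nonneg hu₂.le (fun _ => exp_nonneg _) x
  have hconst := hypercontractivity_constant_rpow hq₁.ne' hq₂.ne' hu₁.le hu₂ hD
  have hroot := rpow_le_rpow (by positivity)
    (heat_exp_mul_hopfLax_rpow_le hq₂ hq hu₂ ht hf x hint) (one_div_nonneg.2 hq₂.le)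
  rwa [← rpow_mul hP₁, div_mul_div_cancel₀' hq₂.ne', mul_rpow (by positivity) hP₂,
    ← rpow_mul (by positivity), mul_comm (_ / 2), rpow_mul (by positivity), hconst,
    mul_comm (_ ^ ((n : ℝ) / 2))] at hroot

end Hypercontractivity

theorem dimensional_local_hypercontractivity_hamilton_jacobi (n : ℕ) (hn : 1 ≤ n)
    (q₁ q₂ : ℝ) (hq₂ : 0 < q₂) (hq : q₂ < q₁)
    (u₁ u₂ : ℝ) (hu₁ : 0 < u₁) (hu₂ : 0 < u₂)
    (ht : 0 < 2 * (u₁ * q₁ - u₂ * q₂))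
    (f : EuclideanSpace ℝ (Fin n) → ℝ) (L : NNReal) (hLip : LipschitzWith L f)
    (C : ℝ) (hbd : ∀ x, |f x| ≤ C)
    (x : EuclideanSpace ℝ (Fin n)) :
    (heat n u₁ (fun y => Real.exp (q₁ * hopfLax n (2 * (u₁ * q₁ - u₂ * q₂)) f y)) x) ^ (1 / q₁) ≤
      (heat n u₂ (fun y => Real.exp (q₂ * f y)) x) ^ (1 / q₂) *
        ((u₁ ^ (1 / q₂) / u₂ ^ (1 / q₁)) *
          ((q₁ - q₂) / (u₁ * q₁ - u₂ * q₂)) ^ (1 / q₂ - 1 / q₁)) ^ ((n : ℝ) / 2) := by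
  have hf_below : BddBelow (Set.range f) :=
    ⟨-C, Set.forall_mem_range.2 fun y => (abs_le.1 (hbd y)).1⟩
  have hf_above : BddAbove (Set.range fun y => q₂ * f y) :=
    ⟨q₂ * C, Set.forall_mem_range.2 fun y => by gcongr; exact (abs_le.1 (hbd y)).2⟩
  exact dimensional_local_hypercontractivity_hamilton_jacobi_general hq₂ hq hu₂ ht
    (bddBelow_range_add_norm_sub_sq_div ht.le hf_below) x
    (integrable_exp_mul_heatKernel hu₂ (hLip.continuous.measurable.const_mul q₂) hf_above x)
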